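/- arXiv:1705.06434 — 3 statements merged into one kernel-verified Lean document; each statement's English description precedes it below -/
import Mathlib

section
/- Let λ be a Dyck word of semilength n. A natural labelling of λ is a bijection g from the chords of λ to {1,…,n} such that g(c) < g(c') whenever c' is nested in c; its inversion statistic is inv(g) := #{ordered pairs (c,c') of chords with c' strictly to the right of c and g(c') < g(c)}. Then Σ_g q^{inv(g)} · ∏_{c ∈ Chord(λ)} [l(c)] = [n]! in ℤ[q], where the sum is over all natural labellings g of λ. -/
/-!
Dyck words, chords, nesting, capacities and Lascoux–Schützenberger labellings.
A step is a `Bool`: `true` = U (up), `false` = D (down).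
-/

open scoped BigOperators Classical

noncomputable section

/-- The height (#U − #D) of the prefix of length `k`. -/
def heightAt (l : List Bool) (k : ℕ) : ℤ :=
  ((l.take k).count true : ℤ) - ((l.take k).count false : ℤ)

/-- `l` is a Dyck word: equally many U's and D's, and every prefix has at least
as many U's as D's. -/
def IsDyckWord (l : List Bool) : Prop :=
  l.count true = l.count false ∧
    ∀ k, (l.take k).count false ≤ (l.take k).count true

/-- `(i,j)` is a chord of `l` (0-indexed matched pair of a U at `i` and a D at `j`
under the standard parenthesis matching). -/
def IsChord (l : List Bool) (i j : ℕ) : Prop :=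
  i < j ∧ j < l.length ∧ l.getD i false = true ∧ l.getD j true = false ∧
    heightAt l (j + 1) = heightAt l i ∧
    ∀ k ∈ Finset.Icc (i + 1) j, heightAt l i < heightAt l k

/-- The finset of chords of `l`. -/
def chords (l : List Bool) : Finset (ℕ × ℕ) :=
  (Finset.range l.length ×ˢ Finset.range l.length).filter fun p => IsChord l p.1 p.2

/-- `c' = (i',j')` is nested in `c = (i,j)` iff `i < i' < j' < j`. -/
def NestedIn (c' c : ℕ × ℕ) : Prop :=
  c.1 < c'.1 ∧ c'.1 < c'.2 ∧ c'.2 < c.2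

/-- The length `l(c)` of a chord: one plus the number of chords nested in it. -/
def chordLen (l : List Bool) (c : ℕ × ℕ) : ℕ :=
  1 + ((chords l).filter fun c' => NestedIn c' c).card

/-- The capacity of a chord: the number of D's strictly before its opening position. -/
def cap (l : List Bool) (c : ℕ × ℕ) : ℕ := (l.take c.1).count false

/-- LS-labellings of `l`: functions on chords (encoded as functions on `ℕ × ℕ`
vanishing off the chords) which weakly increase under nesting and are bounded by
the capacity on leaf chords. -/
def LSLabellings (l : List Bool) : Set ((ℕ × ℕ) → ℕ) :=
  {f | (∀ c, c ∉ chords l → f c = 0) ∧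
       (∀ c ∈ chords l, ∀ c' ∈ chords l, NestedIn c' c → f c ≤ f c') ∧
       (∀ c ∈ chords l, (∀ c' ∈ chords l, ¬ NestedIn c' c) → f c ≤ cap l c)}

/-- The quantum integer [n] = 1 + q + ⋯ + q^{n-1} in ℤ[q]. -/
def qintP (n : ℕ) : Polynomial ℤ := ∑ i ∈ Finset.range n, Polynomial.X ^ i

/-- The quantum factorial [n]! = [1][2]⋯[n] in ℤ[q]. -/
def qfactP (n : ℕ) : Polynomial ℤ := ∏ i ∈ Finset.range n, qintP (i + 1)

/-- The LS generating polynomial P_λ = Σ_f q^{Σ_c f(c)} ∈ ℤ[q], summed over all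
LS-labellings f of λ. -/
def PLS (l : List Bool) : Polynomial ℤ :=
  ∑ᶠ f ∈ LSLabellings l, Polynomial.X ^ (∑ c ∈ chords l, f c)

/-- Natural labellings of λ: bijections from the chords onto {1,…,n} (encoded as
functions on `ℕ × ℕ` vanishing off the chords) that strictly increase under nesting. -/
def NaturalLabellings (l : List Bool) (n : ℕ) : Set ((ℕ × ℕ) → ℕ) :=
  {g | (∀ c, c ∉ chords l → g c = 0) ∧
       Set.BijOn g (chords l : Set (ℕ × ℕ)) (Set.Icc 1 n) ∧
       (∀ c ∈ chords l, ∀ c' ∈ chords l, NestedIn c' c → g c < g c')}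

/-- The inversion statistic of a natural labelling: the number of ordered pairs
(c, c') of chords with c' strictly to the right of c and g(c') < g(c). -/
def invStat (l : List Bool) (g : (ℕ × ℕ) → ℕ) : ℕ :=
  (((chords l) ×ˢ (chords l)).filter fun p => p.1.2 < p.2.1 ∧ g p.2 < g p.1).card

namespace LSD

def Lam (S : Finset (ℕ × ℕ)) : Prop :=
  (∀ c ∈ S, c.1 < c.2) ∧ ∀ c ∈ S, ∀ c' ∈ S, c ≠ c' →
    NestedIn c c' ∨ NestedIn c' c ∨ c.2 < c'.1 ∨ c'.2 < c.1

def NL (S : Finset (ℕ × ℕ)) (a : ℕ) : Set ((ℕ × ℕ) → ℕ) :=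
  {g | (∀ c, c ∉ S → g c = 0) ∧
       Set.BijOn g (S : Set (ℕ × ℕ)) (Set.Ico a (a + S.card)) ∧
       (∀ c ∈ S, ∀ c' ∈ S, NestedIn c' c → g c < g c')}

def inv (S : Finset (ℕ × ℕ)) (g : (ℕ × ℕ) → ℕ) : ℕ :=
  ((S ×ˢ S).filter fun p => p.1.2 < p.2.1 ∧ g p.2 < g p.1).card

def len (S : Finset (ℕ × ℕ)) (c : ℕ × ℕ) : ℕ :=
  1 + (S.filter fun c' => NestedIn c' c).card

def lft (S : Finset (ℕ × ℕ)) (c : ℕ × ℕ) : ℕ := (S.filter fun c' => c'.2 < c.1).card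

def roots (S : Finset (ℕ × ℕ)) : Finset (ℕ × ℕ) :=
  S.filter fun c => ∀ c' ∈ S, ¬ NestedIn c c'

lemma Lam.mono {S T : Finset (ℕ × ℕ)} (h : Lam S) (hT : T ⊆ S) : Lam T :=
  ⟨fun c hc => h.1 c (hT hc), fun c hc c' hc' => h.2 c (hT hc) c' (hT hc')⟩

lemma qint_add (m k : ℕ) : qintP (m + k) = qintP m + Polynomial.X ^ m * qintP k := by
  simp [qintP, Finset.sum_range_add, Finset.mul_sum, pow_add]

lemma sum_roots (n : ℕ) : ∀ S : Finset (ℕ × ℕ), Lam S → S.card = n →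
    ∑ c ∈ roots S, (Polynomial.X : Polynomial ℤ) ^ lft S c * qintP (len S c) = qintP n := by
  induction n using Nat.strong_induction_on with
  | _ n ih =>
  intro S hS hn
  rcases S.eq_empty_or_nonempty with rfl | hne
  · simp at hn; subst hn; simp [roots, qintP]
  obtain ⟨c, hc, hmax⟩ := S.exists_max_image (fun c => c.2) hne
  set T := S.filter (fun c' => c'.2 < c.1) with hT
  have hTS : T ⊆ S := Finset.filter_subset _ _
  have hc1 := hS.1 c hc
  have key : ∀ x ∈ S, x ≠ c → NestedIn x c ∨ x.2 < c.1 := by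
    intro x hx hxc
    have h1 := hmax x hx
    have h2 := hS.1 x hx
    rcases hS.2 x hx c hc hxc with h | h | h | h
    · exact Or.inl h
    · unfold NestedIn at h; omega
    · exact Or.inr h
    · omega
  have hcard : lft S c + len S c = n := by
    have : S = T ∪ (insert c (S.filter fun c' => NestedIn c' c)) := by
      ext x
      simp only [hT, Finset.mem_union, Finset.mem_filter, Finset.mem_insert]
      constructor
      · intro hx
        by_cases hxc : x = c
        · exact Or.inr (Or.inl hxc)
        · rcases key x hx hxc with h | h
          · exact Or.inr (Or.inr ⟨hx, h⟩)
          · exact Or.inl ⟨hx, h⟩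
      · rintro (h | h | h)
        · exact h.1
        · exact h ▸ hc
        · exact h.1
    have hcd := congrArg Finset.card this
    rw [Finset.card_union_of_disjoint, Finset.card_insert_of_notMem] at hcd
    · have hTc : T.card = lft S c := rfl
      unfold len; omega
    · intro h
      have := (Finset.mem_filter.mp h).2
      unfold NestedIn at this; omega
    · rw [Finset.disjoint_left]
      intro x hx hx'
      simp only [hT, Finset.mem_filter, Finset.mem_insert] at hx hx'
      rcases hx' with rfl | h
      · omega
      · have := h.2; unfold NestedIn at this; omega
  have hroots : roots S = insert c (roots T) := by
    ext x
    simp only [roots, Finset.mem_insert, Finset.mem_filter]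
    constructor
    · rintro ⟨hx, hr⟩
      by_cases hxc : x = c
      · exact Or.inl hxc
      · rcases key x hx hxc with h | h
        · exact absurd h (hr c hc)
        · exact Or.inr ⟨by simp [hT, hx, h], fun c' hc' => hr c' (hTS hc')⟩
    · rintro (rfl | ⟨hx, hr⟩)
      · refine ⟨hc, fun c' hc' h => ?_⟩
        have := hmax c' hc'
        unfold NestedIn at h; omega
      · refine ⟨hTS hx, fun c' hc' h => ?_⟩
        simp only [hT, Finset.mem_filter] at hx
        by_cases hcc : c' = c
        · subst hcc; have := hS.1 x hx.1; unfold NestedIn at h; omega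
        · rcases key c' hc' hcc with h' | h'
          · unfold NestedIn at h h'; omega
          · exact hr c' (by simp [hT, hc', h']) h
  have hcT : c ∉ roots T := by
    intro h
    have := Finset.filter_subset _ _ h
    simp only [hT, Finset.mem_filter] at this; omega
  have hlen1 : 1 ≤ len S c := by unfold len; omega
  have hTc : T.card = lft S c := rfl
  rw [hroots, Finset.sum_insert hcT, ← hcard, qint_add,
    ← ih (lft S c) (by omega) T (hS.mono hTS) hTc, add_comm]
  congr 1
  apply Finset.sum_congr rfl
  intro x hx
  have hxT := Finset.filter_subset _ _ hx
  simp only [hT, Finset.mem_filter] at hxT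
  have h2 := hS.1 x hxT.1
  have e1 : lft S x = lft T x := by
    unfold lft
    congr 1
    ext y
    simp only [hT, Finset.mem_filter]
    constructor
    · rintro ⟨h, h'⟩; exact ⟨⟨h, by omega⟩, h'⟩
    · rintro ⟨⟨h, _⟩, h'⟩; exact ⟨h, h'⟩
  have e2 : len S x = len T x := by
    unfold len
    congr 2
    ext y
    simp only [hT, Finset.mem_filter]
    constructor
    · rintro ⟨h, h'⟩; exact ⟨⟨h, by unfold NestedIn at h'; omega⟩, h'⟩
    · rintro ⟨⟨h, _⟩, h'⟩; exact ⟨h, h'⟩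
  rw [e1, e2]

lemma NL_empty (a : ℕ) : NL ∅ a = {fun _ => 0} := by
  ext g
  simp [NL, funext_iff]

lemma NL_ge {S : Finset (ℕ × ℕ)} {a : ℕ} {g} (hg : g ∈ NL S a) {x} (hx : x ∈ S) : a ≤ g x :=
  (hg.2.1.mapsTo hx).1

lemma NL_eq {S : Finset (ℕ × ℕ)} (hne : S.Nonempty) (a : ℕ) :
    NL S a = ⋃ c ∈ (roots S : Set (ℕ × ℕ)),
      (fun g => Function.update g c a) '' NL (S.erase c) (a + 1) := by
  have hpos := hne.card_pos
  ext g
  simp only [Set.mem_iUnion, Set.mem_image, exists_prop, Finset.mem_coe]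
  constructor
  · rintro ⟨h0, hb, hi⟩
    obtain ⟨c, hc, hca⟩ := hb.surjOn (show a ∈ Set.Ico a (a + S.card) from ⟨le_rfl, by omega⟩)
    have hc : c ∈ S := hc
    refine ⟨c, ?_, Function.update g c 0, ⟨?_, ?_, ?_⟩, ?_⟩
    · simp only [roots, Finset.mem_filter]
      refine ⟨hc, fun c' hc' h => ?_⟩
      have h1 := hi c' hc' c hc h
      have h2 := (hb.mapsTo hc').1
      omega
    · intro x hx
      by_cases hxc : x = c
      · simp [hxc]
      · rw [Function.update_of_ne hxc]; exact h0 x (by simpa [hxc] using hx)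
    · have hcardE : a + 1 + (S.erase c).card = a + S.card := by
        rw [Finset.card_erase_of_mem hc]; omega
      rw [hcardE]
      refine ⟨?_, ?_, ?_⟩
      · intro x hx
        simp only [Finset.coe_erase, Set.mem_sdiff, Finset.mem_coe, Set.mem_singleton_iff] at hx
        rw [Function.update_of_ne hx.2]
        have h1 := hb.mapsTo (show x ∈ (S : Set _) from hx.1)
        have h2 : g x ≠ a := fun h => hx.2 (hb.injOn hx.1 hc (h.trans hca.symm))
        simp only [Set.mem_Ico] at h1 ⊢
        omega
      · intro x hx y hy hxy
        simp only [Finset.coe_erase, Set.mem_sdiff, Finset.mem_coe, Set.mem_singleton_iff] at hx hy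
        rw [Function.update_of_ne hx.2, Function.update_of_ne hy.2] at hxy
        exact hb.injOn hx.1 hy.1 hxy
      · intro k hk
        simp only [Set.mem_Ico] at hk
        obtain ⟨x, hx, hxk⟩ := hb.surjOn (show k ∈ Set.Ico a (a + S.card) from ⟨by omega, hk.2⟩)
        have hxc : x ≠ c := by rintro rfl; omega
        exact ⟨x, by simpa [hxc] using hx, by rw [Function.update_of_ne hxc, hxk]⟩
    · intro x hx y hy h
      rw [Finset.mem_erase] at hx hy
      rw [Function.update_of_ne hx.1, Function.update_of_ne hy.1]
      exact hi x hx.2 y hy.2 h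
    · simp [← hca]
  · rintro ⟨c, hcr, g', hg', rfl⟩
    simp only [roots, Finset.mem_filter] at hcr
    obtain ⟨hc, hroot⟩ := hcr
    have hge := fun x (hx : x ∈ S.erase c) => NL_ge hg' hx
    obtain ⟨h0, hb, hi⟩ := hg'
    have hcardE : a + 1 + (S.erase c).card = a + S.card := by
      rw [Finset.card_erase_of_mem hc]; omega
    rw [hcardE] at hb
    refine ⟨?_, ⟨?_, ?_, ?_⟩, ?_⟩
    · intro x hx
      have hxc : x ≠ c := by rintro rfl; exact hx hc
      rw [Function.update_of_ne hxc]; exact h0 x (by simp [hx])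
    · intro x hx
      have hx : x ∈ S := hx
      by_cases hxc : x = c
      · subst hxc; simp; omega
      · rw [Function.update_of_ne hxc]
        have := hb.mapsTo (show x ∈ ((S.erase c : Finset _) : Set _) by simp [hx, hxc])
        simp only [Set.mem_Ico] at this ⊢
        omega
    · intro x hx y hy hxy
      have hx : x ∈ S := hx
      have hy : y ∈ S := hy
      by_cases hxc : x = c <;> by_cases hyc : y = c
      · rw [hxc, hyc]
      · have := hge y (by simp [hy, hyc])
        rw [Function.update_of_ne hyc, hxc, Function.update_self] at hxy; omega
      · have := hge x (by simp [hx, hxc])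
        rw [Function.update_of_ne hxc, hyc, Function.update_self] at hxy; omega
      · rw [Function.update_of_ne hxc, Function.update_of_ne hyc] at hxy
        exact hb.injOn (by simp [hx, hxc]) (by simp [hy, hyc]) hxy
    · intro k hk
      simp only [Set.mem_Ico] at hk
      by_cases hka : k = a
      · exact ⟨c, hc, by simp [hka]⟩
      · obtain ⟨x, hx, hxk⟩ := hb.surjOn (show k ∈ Set.Ico (a+1) (a + S.card) from ⟨by omega, hk.2⟩)
        simp only [Finset.coe_erase, Set.mem_sdiff, Finset.mem_coe, Set.mem_singleton_iff] at hx
        exact ⟨x, hx.1, by rw [Function.update_of_ne hx.2, hxk]⟩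
    · intro x hx y hy h
      have hyc : y ≠ c := by rintro rfl; exact hroot x hx h
      have hy' := hge y (by simp [hy, hyc])
      rw [Function.update_of_ne hyc]
      by_cases hxc : x = c
      · rw [hxc, Function.update_self]; omega
      · rw [Function.update_of_ne hxc]
        exact hi x (by simp [hx, hxc]) y (by simp [hy, hyc]) h

lemma inv_update {S : Finset (ℕ × ℕ)} (hS : Lam S) {c} (hc : c ∈ S) {a : ℕ} {g}
    (hg : g ∈ NL (S.erase c) (a + 1)) :
    inv S (Function.update g c a) = lft S c + inv (S.erase c) g := by
  have hge := fun x (hx : x ∈ S.erase c) => NL_ge hg hx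
  have hc1 := hS.1 c hc
  have : ((S ×ˢ S).filter fun p => p.1.2 < p.2.1 ∧
        Function.update g c a p.2 < Function.update g c a p.1) =
      (S.filter fun c' => c'.2 < c.1).image (fun x => (x, c)) ∪
      ((S.erase c ×ˢ S.erase c).filter fun p => p.1.2 < p.2.1 ∧ g p.2 < g p.1) := by
    ext ⟨x, y⟩
    simp only [Finset.mem_filter, Finset.mem_product, Finset.mem_union, Finset.mem_image,
      Prod.mk.injEq, Finset.mem_erase]
    by_cases hxc : x = c <;> by_cases hyc : y = c
    · subst hxc; subst hyc; simp; omega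
    · subst hxc
      rw [Function.update_of_ne hyc, Function.update_self]
      constructor
      · rintro ⟨⟨_, hy⟩, _, h⟩
        have := hge y (by simp [hy, hyc]); omega
      · rintro (⟨z, _, _, h⟩ | h)
        · exact absurd h.symm hyc
        · exact absurd rfl h.1.1.1
    · subst hyc
      rw [Function.update_of_ne hxc, Function.update_self]
      constructor
      · rintro ⟨⟨hx, hy⟩, h, _⟩
        exact Or.inl ⟨x, ⟨hx, h⟩, rfl, rfl⟩
      · rintro (⟨z, ⟨h1, h2⟩, rfl, _⟩ | h)
        · have := hge z (by simp [h1, hxc])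
          exact ⟨⟨h1, hc⟩, h2, by omega⟩
        · exact absurd rfl h.1.2.1
    · rw [Function.update_of_ne hxc, Function.update_of_ne hyc]
      constructor
      · rintro ⟨⟨hx, hy⟩, h⟩
        exact Or.inr ⟨⟨⟨hxc, hx⟩, ⟨hyc, hy⟩⟩, h⟩
      · rintro (⟨z, _, _, h⟩ | h)
        · exact absurd h.symm hyc
        · exact ⟨⟨h.1.1.2, h.1.2.2⟩, h.2⟩
  unfold inv
  rw [this, Finset.card_union_of_disjoint, Finset.card_image_of_injective]
  · rfl
  · intro x y h; simpa using h
  · rw [Finset.disjoint_left]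
    rintro ⟨x, y⟩ h h'
    simp only [Finset.mem_filter, Finset.mem_product, Finset.mem_image,
      Prod.mk.injEq, Finset.mem_erase] at h h'
    obtain ⟨z, _, _, h⟩ := h
    exact h'.1.2.1 h.symm

lemma main (n : ℕ) : ∀ (S : Finset (ℕ × ℕ)) (a : ℕ), Lam S → S.card = n →
    (NL S a).Finite ∧
    (∑ᶠ g ∈ NL S a, (Polynomial.X : Polynomial ℤ) ^ inv S g) *
        (∏ c ∈ S, qintP (len S c)) = qfactP n := by
  induction n with
  | zero =>
    intro S a _ hn
    rw [Finset.card_eq_zero] at hn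
    subst hn
    rw [NL_empty]
    refine ⟨Set.finite_singleton _, ?_⟩
    rw [finsum_mem_singleton]
    simp [inv, qfactP]
  | succ n ih =>
    intro S a hS hn
    have hne : S.Nonempty := Finset.card_pos.mp (by omega)
    have hrS : ∀ c ∈ roots S, c ∈ S := fun c hc => Finset.filter_subset _ _ hc
    have hE : ∀ c ∈ roots S, _ := fun c hc => ih (S.erase c) (a + 1)
      (hS.mono (Finset.erase_subset _ _)) (by rw [Finset.card_erase_of_mem (hrS c hc)]; omega)
    have hfin : ∀ c ∈ (roots S : Set (ℕ × ℕ)),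
        ((fun g => Function.update g c a) '' NL (S.erase c) (a + 1)).Finite :=
      fun c hc => (hE c hc).1.image _
    have hdis : (roots S : Set (ℕ × ℕ)).PairwiseDisjoint
        (fun c => (fun g => Function.update g c a) '' NL (S.erase c) (a + 1)) := by
      intro c hc c' hc' hcc
      simp only [Function.onFun]
      rw [Set.disjoint_left]
      rintro _ ⟨g, hg, rfl⟩ ⟨g', hg', h⟩
      have h1 := congrFun h c
      simp only [Function.update_self] at h1
      rw [Function.update_of_ne hcc] at h1
      have := NL_ge hg' (x := c) (by simp [hcc, hrS c hc])
      omega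
    rw [NL_eq hne]
    refine ⟨(Finset.finite_toSet _).biUnion hfin, ?_⟩
    rw [finsum_mem_biUnion hdis (Finset.finite_toSet _) hfin, finsum_mem_coe_finset,
      Finset.sum_mul, qfactP, Finset.prod_range_succ, ← qfactP, ← sum_roots (n+1) S hS hn,
      Finset.mul_sum]
    apply Finset.sum_congr rfl
    intro c hc
    have hcS := hrS c hc
    rw [finsum_mem_image, ← (hE c hc).2, ← Finset.mul_prod_erase _ _ hcS]
    · have e1 : ∑ᶠ g ∈ NL (S.erase c) (a + 1),
            (Polynomial.X : Polynomial ℤ) ^ inv S (Function.update g c a) =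
          Polynomial.X ^ lft S c *
            ∑ᶠ g ∈ NL (S.erase c) (a + 1), (Polynomial.X : Polynomial ℤ) ^ inv (S.erase c) g := by
        rw [mul_finsum_mem' _ _ (hE c hc).1]
        apply finsum_mem_congr rfl
        intro g hg
        rw [inv_update hS hcS hg, pow_add]
      have e2 : ∏ x ∈ S.erase c, qintP (len S x) =
          ∏ x ∈ S.erase c, qintP (len (S.erase c) x) := by
        apply Finset.prod_congr rfl
        intro x hx
        have hx' := Finset.mem_erase.mp hx
        congr 1
        unfold len
        congr 2
        ext y
        simp only [Finset.mem_filter, Finset.mem_erase]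
        constructor
        · rintro ⟨h, h'⟩
          refine ⟨⟨?_, h⟩, h'⟩
          rintro rfl
          exact (Finset.mem_filter.mp hc).2 x hx'.2 h'
        · rintro ⟨⟨_, h⟩, h'⟩; exact ⟨h, h'⟩
      rw [e1, e2]
      ring
    · intro g hg g' hg' h
      funext x
      by_cases hxc : x = c
      · rw [hg.1 x (by simp [hxc]), hg'.1 x (by simp [hxc])]
      · have := congrFun h x
        simpa [Function.update_of_ne hxc] using this

lemma count_take (l : List Bool) (k : ℕ) :
    (l.take k).count true = ((Finset.range k).filter fun i => l.getD i false = true).card := by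
  induction k with
  | zero => simp
  | succ k ih =>
    rw [Finset.range_add_one, Finset.filter_insert, List.take_add_one, List.count_append, ih]
    rcases lt_or_ge k l.length with h | h
    · cases hb : l[k] <;> simp [h, hb]
    · simp [h]

lemma height_succ {l : List Bool} {k : ℕ} (hk : k < l.length) :
    (l.getD k false = true ∧ l.getD k true = true ∧ heightAt l (k + 1) = heightAt l k + 1) ∨
    (l.getD k false = false ∧ l.getD k true = false ∧ heightAt l (k + 1) = heightAt l k - 1) := by
  unfold heightAt
  rw [List.take_add_one, List.count_append, List.count_append]
  cases hb : l[k]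
  · right; simp [hk, hb]; ring
  · left; simp [hk, hb]; ring

lemma mem_chords {l : List Bool} {c : ℕ × ℕ} : c ∈ chords l ↔ IsChord l c.1 c.2 := by
  simp only [chords, Finset.mem_filter, Finset.mem_product, Finset.mem_range,
    and_iff_right_iff_imp]
  intro h
  exact ⟨h.1.trans h.2.1, h.2.1⟩

lemma chord_le {l : List Bool} {i j j' : ℕ} (h : IsChord l i j) (h' : IsChord l i j') : j ≤ j' := by
  by_contra hlt
  have h1 := h.2.2.2.2.2 (j' + 1) (by have := h'.1; simp; omega)
  have h2 := h'.2.2.2.2.1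
  omega

lemma chord_pair {l : List Bool} {i j i' j' : ℕ} (h : IsChord l i j) (h' : IsChord l i' j')
    (hlt : i < i') : j' < j ∨ j < i' := by
  obtain ⟨h1, h2, h3, h4, h5, h6⟩ := h
  obtain ⟨g1, g2, g3, g4, g5, g6⟩ := h'
  by_contra hcon
  push Not at hcon
  have hne : i' ≠ j := by
    rintro rfl
    rcases height_succ h2 with ⟨a, b, _⟩ | ⟨a, b, _⟩
    · rw [b] at h4; cases h4
    · rw [a] at g3; cases g3
  have a1 := h6 i' (by simp; omega)
  rcases Nat.lt_or_ge j j' with hj | hj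
  · have := g6 (j + 1) (by simp; omega)
    omega
  · have : j = j' := by omega
    subst this; omega

lemma chords_lam (l : List Bool) : Lam (chords l) := by
  refine ⟨fun c hc => (mem_chords.mp hc).1, ?_⟩
  rintro ⟨i, j⟩ hc ⟨i', j'⟩ hc' hne
  rw [mem_chords] at hc hc'
  simp only [NestedIn] at *
  have p1 := hc.1
  have p2 := hc'.1
  rcases lt_trichotomy i i' with h | h | h
  · have := chord_pair hc hc' h; omega
  · subst h
    exact absurd (by rw [le_antisymm (chord_le hc hc') (chord_le hc' hc)]) hne
  · have := chord_pair hc' hc h; omega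

lemma exists_chord {l : List Bool} (hd : IsDyckWord l) {i : ℕ} (hi : i < l.length)
    (hU : l.getD i false = true) : ∃ j, IsChord l i j := by
  have hex : ∃ j, i < j ∧ heightAt l (j + 1) ≤ heightAt l i := by
    refine ⟨l.length, hi, ?_⟩
    have h1 := hd.1
    have h2 := hd.2 i
    unfold heightAt
    rw [List.take_of_length_le (by omega)]
    omega
  have hs : heightAt l (i + 1) = heightAt l i + 1 := by
    rcases height_succ hi with ⟨_, _, h⟩ | ⟨h, _, _⟩
    · exact h
    · rw [h] at hU; cases hU
  obtain ⟨hj1, hj2⟩ := Nat.find_spec hex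
  have hmin := fun m => Nat.find_min hex (m := m)
  set j := Nat.find hex
  have hk : ∀ k ∈ Finset.Icc (i + 1) j, heightAt l i < heightAt l k := by
    intro k hk
    rw [Finset.mem_Icc] at hk
    rcases Nat.eq_or_lt_of_le hk.1 with h | h
    · rw [← h]; omega
    · have := hmin (k - 1) (by omega)
      rw [show k - 1 + 1 = k by omega] at this
      by_contra hc
      exact this ⟨by omega, by omega⟩
  have hjj := hk j (by simp; omega)
  have hjl : j < l.length := by
    by_contra hcon
    have e : heightAt l (j + 1) = heightAt l j := by
      unfold heightAt
      rw [List.take_of_length_le (by omega), List.take_of_length_le (by omega)]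
    omega
  refine ⟨j, hj1, hjl, hU, ?_⟩
  rcases height_succ hjl with ⟨_, _, h⟩ | ⟨_, h', h⟩
  · omega
  · exact ⟨h', by omega, hk⟩

lemma chords_card {l : List Bool} (hd : IsDyckWord l) {n : ℕ} (hlen : l.length = 2 * n) :
    (chords l).card = n := by
  have h1 : l.count true = n := by
    have := List.count_true_add_count_false l
    have := hd.1
    omega
  have h2 := count_take l l.length
  rw [List.take_length, h1] at h2
  rw [h2]
  apply Finset.card_bij (fun c _ => c.1)
  · intro c hc
    rw [mem_chords] at hc
    simp only [Finset.mem_filter, Finset.mem_range]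
    exact ⟨hc.1.trans hc.2.1, hc.2.2.1⟩
  · rintro ⟨i, j⟩ hc ⟨i', j'⟩ hc' h
    rw [mem_chords] at hc hc'
    simp only at h hc hc'
    subst h
    rw [le_antisymm (chord_le hc hc') (chord_le hc' hc)]
  · intro i hi
    simp only [Finset.mem_filter, Finset.mem_range] at hi
    obtain ⟨j, hj⟩ := exists_chord hd hi.1 hi.2
    exact ⟨(i, j), mem_chords.mpr hj, rfl⟩

end LSD

/-- Paper's Lemma `LSDyck`: Σ_g q^{inv(g)} · ∏_c [l(c)] = [n]!. -/
theorem stmt_12 (n : ℕ) (l : List Bool) (hd : IsDyckWord l) (hlen : l.length = 2 * n) :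
    (∑ᶠ g ∈ NaturalLabellings l n, (Polynomial.X : Polynomial ℤ) ^ invStat l g) *
        (∏ c ∈ chords l, qintP (chordLen l c)) = qfactP n := by
  have hc := LSD.chords_card hd hlen
  have h := (LSD.main n (chords l) 1 (LSD.chords_lam l) hc).2
  have e : NaturalLabellings l n = LSD.NL (chords l) 1 := by
    have : Set.Icc 1 n = Set.Ico 1 (1 + (chords l).card) := by
      ext x; simp only [Set.mem_Icc, Set.mem_Ico]; omega
    unfold NaturalLabellings LSD.NL
    rw [this]
  rw [e]
  exact h
end
end

section
/- Let λ be a Dyck word of semilength n and let λ̄ be its mirror image, the Dyck word defined by λ̄_i := U if λ_{2n+1−i} = D and λ̄_i := D if λ_{2n+1−i} = U. Then the LS generating polynomials agree: P_λ = P_{λ̄} in ℤ[q]. -/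
/-!
Dyck words, chords, nesting, capacities and Lascoux–Schützenberger labellings.
A step is a `Bool`: `true` = U (up), `false` = D (down).
-/

open scoped BigOperators Classical

noncomputable section

open Polynomial in
inductive DR : List Bool → ℕ → Polynomial ℤ → Prop
  | nil : DR [] 0 1
  | node (a b : List Bool) (m n : ℕ) (A B : Polynomial ℤ) : DR a m A → DR b n B →
      DR (true :: (a ++ false :: b)) (m + n + 1) (A * B * qintP (m + 1))

theorem DR.append {a b : List Bool} {m n : ℕ} {A B : Polynomial ℤ} (ha : DR a m A)
    (hb : DR b n B) : DR (a ++ b) (m + n) (A * B) := by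
  induction ha with
  | nil => simpa using hb
  | node a1 a2 m1 m2 A1 A2 h1 h2 ih1 ih2 =>
    have := DR.node a1 (a2 ++ b) m1 (m2 + n) A1 (A2 * B) h1 ih2
    convert this using 1
    · simp
    · ring
    · ring

theorem DR.mirror {a : List Bool} {m : ℕ} {A : Polynomial ℤ} (ha : DR a m A) :
    DR ((a.map not).reverse) m A := by
  induction ha with
  | nil => exact DR.nil
  | node a1 a2 m1 m2 A1 A2 h1 h2 ih1 ih2 =>
    have := DR.append ih2 (DR.node _ [] _ _ _ _ ih1 DR.nil)
    convert this using 1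
    · simp
    · ring
    · ring

theorem qintP_ne (n : ℕ) : qintP (n + 1) ≠ 0 := by
  intro h
  have := congrArg (Polynomial.eval 1) h
  simp [qintP, Polynomial.eval_finsetSum] at this
  omega

theorem DR.ne_zero {a : List Bool} {m : ℕ} {A : Polynomial ℤ} (ha : DR a m A) : A ≠ 0 := by
  induction ha with
  | nil => exact one_ne_zero
  | node a1 a2 m1 m2 A1 A2 h1 h2 ih1 ih2 =>
    exact mul_ne_zero (mul_ne_zero ih1 ih2) (qintP_ne _)

theorem DR.length {a : List Bool} {m : ℕ} {A : Polynomial ℤ} (ha : DR a m A) :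
    a.length = 2 * m := by
  induction ha with
  | nil => rfl
  | node a1 a2 m1 m2 A1 A2 h1 h2 ih1 ih2 => simp; omega

theorem DR.countf {a : List Bool} {m : ℕ} {A : Polynomial ℤ} (ha : DR a m A) :
    a.count false = m := by
  induction ha with
  | nil => rfl
  | node a1 a2 m1 m2 A1 A2 h1 h2 ih1 ih2 => simp; omega

theorem DR.countt {a : List Bool} {m : ℕ} {A : Polynomial ℤ} (ha : DR a m A) :
    a.count true = m := by
  induction ha with
  | nil => rfl
  | node a1 a2 m1 m2 A1 A2 h1 h2 ih1 ih2 => simp; omega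

def SS : ℕ → List Bool → Prop
  | 0, l => ∃ n A, DR l n A
  | h + 1, l => ∃ a l' n A, DR a n A ∧ SS h l' ∧ l = a ++ false :: l'

theorem SS_of (l : List Bool) : ∀ h : ℕ, (∀ k, (l.take k).count false ≤ (l.take k).count true + h) →
    l.count false = l.count true + h → SS h l := by
  induction l with
  | nil => 
    intro h h1 h2
    have : h = 0 := by simpa using h2.symm
    subst this
    exact ⟨_, _, DR.nil⟩
  | cons x l ih =>
    intro h h1 h2
    cases x with
    | true =>
      obtain ⟨a, l', n, A, hA, hS, rfl⟩ := ih (h + 1) (fun k => by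
        have := h1 (k + 1); simp at this; omega) (by simp at h2 ⊢; omega)
      cases h with
      | zero =>
        obtain ⟨m, B, hB⟩ := hS
        exact ⟨_, _, DR.node _ _ _ _ _ _ hA hB⟩
      | succ h =>
        obtain ⟨b, l'', m, B, hB, hS', rfl⟩ := hS
        exact ⟨_, l'', _, _, DR.node _ _ _ _ _ _ hA hB, hS', by simp⟩
    | false =>
      cases h with
      | zero => have := h1 1; simp at this
      | succ h =>
        exact ⟨[], l, _, _, DR.nil, ih h (fun k => by
          have := h1 (k + 1); simp at this; omega) (by simp at h2 ⊢; omega), rfl⟩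

theorem DR_of (l : List Bool) (h : IsDyckWord l) : ∃ n A, DR l n A :=
  SS_of l 0 (fun k => by simpa using h.2 k) (by simpa using h.1.symm)

/-! abstract labellings -/

def LL (C : Finset (ℕ × ℕ)) (g : ℕ × ℕ → ℕ) : Set ((ℕ × ℕ) → ℕ) :=
  {f | (∀ c, c ∉ C → f c = 0) ∧
       (∀ c ∈ C, ∀ c' ∈ C, NestedIn c' c → f c ≤ f c') ∧
       (∀ c ∈ C, f c ≤ g c)}

theorem LL_finite (C : Finset (ℕ × ℕ)) (g : ℕ × ℕ → ℕ) : (LL C g).Finite := by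
  have hinj : Set.InjOn (fun (f : ℕ × ℕ → ℕ) (c : C) => f c) (LL C g) := by
    intro f hf f' hf' h
    funext c
    by_cases hc : c ∈ C
    · exact congrFun h ⟨c, hc⟩
    · rw [hf.1 c hc, hf'.1 c hc]
  refine Set.Finite.of_finite_image ?_ hinj
  refine (Set.Finite.pi (t := fun c : C => Set.Iic (g c)) (fun c => Set.finite_Iic _)).subset ?_
  rintro _ ⟨f, hf, rfl⟩ c _
  exact hf.2.2 c c.2

def LF (C : Finset (ℕ × ℕ)) (g : ℕ × ℕ → ℕ) : Finset ((ℕ × ℕ) → ℕ) := (LL_finite C g).toFinset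

theorem mem_LF {C : Finset (ℕ × ℕ)} {g : ℕ × ℕ → ℕ} {f} : f ∈ LF C g ↔ 
   (∀ c, c ∉ C → f c = 0) ∧
       (∀ c ∈ C, ∀ c' ∈ C, NestedIn c' c → f c ≤ f c') ∧
       (∀ c ∈ C, f c ≤ g c) := by
  simp [LF, LL]

def PL (C : Finset (ℕ × ℕ)) (g : ℕ × ℕ → ℕ) : Polynomial ℤ :=
  ∑ f ∈ LF C g, Polynomial.X ^ (∑ c ∈ C, f c)

theorem PL_congr {C : Finset (ℕ × ℕ)} {g g' : ℕ × ℕ → ℕ} (h : ∀ c ∈ C, g c = g' c) :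
    PL C g = PL C g' := by
  have : LF C g = LF C g' := by
    ext f
    rw [mem_LF, mem_LF]
    refine and_congr_right fun _ => and_congr_right fun _ => forall₂_congr fun c hc => ?_
    rw [h c hc]
  rw [PL, PL, this]

theorem PL_empty (g : ℕ × ℕ → ℕ) : PL ∅ g = 1 := by
  have : LF ∅ g = {0} := by
    ext f
    rw [mem_LF]
    simp [funext_iff]
  simp [PL, this]

theorem PL_image (C : Finset (ℕ × ℕ)) (g : ℕ × ℕ → ℕ) (e : ℕ × ℕ → ℕ × ℕ)
    (he : Function.Injective e) (hn : ∀ c c', NestedIn (e c') (e c) ↔ NestedIn c' c) :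
    PL (C.image e) g = PL C (fun c => g (e c)) := by
  unfold PL
  refine Finset.sum_bij' (fun f _ => fun c => f (e c)) (fun f _ => Function.extend e f 0) ?_ ?_ ?_ ?_ ?_
  · intro f hf
    rw [mem_LF] at hf ⊢
    obtain ⟨h1, h2, h3⟩ := hf
    refine ⟨fun c hc => h1 _ (by simpa [he.eq_iff] using hc), fun c hc c' hc' h => 
      h2 _ (Finset.mem_image_of_mem _ hc) _ (Finset.mem_image_of_mem _ hc') ((hn _ _).2 h),
      fun c hc => h3 _ (Finset.mem_image_of_mem _ hc)⟩
  · intro f hf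
    rw [mem_LF] at hf ⊢
    obtain ⟨h1, h2, h3⟩ := hf
    refine ⟨fun c hc => ?_, ?_, ?_⟩
    · by_cases h : ∃ d, e d = c
      · obtain ⟨d, rfl⟩ := h
        rw [he.extend_apply]
        exact h1 _ (fun hd => hc (Finset.mem_image_of_mem _ hd))
      · rw [Function.extend_apply' _ _ _ h]; rfl
    · simp only [Finset.forall_mem_image, he.extend_apply, hn]
      exact h2
    · simp only [Finset.forall_mem_image, he.extend_apply]
      exact h3
  · intro f hf
    rw [mem_LF] at hf
    funext c
    by_cases h : ∃ d, e d = c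
    · obtain ⟨d, rfl⟩ := h
      rw [he.extend_apply]
    · rw [Function.extend_apply' _ _ _ h, hf.1 c]
      · rfl
      · intro hc
        obtain ⟨d, _, hd⟩ := Finset.mem_image.1 hc
        exact h ⟨d, hd⟩
  · intro f hf
    funext c
    simp [he.extend_apply]
  · intro f hf
    rw [Finset.sum_image (fun _ _ _ _ h => he h)]

theorem PL_union (C D : Finset (ℕ × ℕ)) (g : ℕ × ℕ → ℕ) (hd : Disjoint C D)
    (h1 : ∀ c ∈ C, ∀ d ∈ D, ¬ NestedIn c d ∧ ¬ NestedIn d c) :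
    PL (C ∪ D) g = PL C g * PL D g := by
  unfold PL
  rw [Finset.sum_mul_sum, ← Finset.sum_product']
  have hCD : ∀ c ∈ C, c ∉ D := fun c hc hc' => (Finset.disjoint_left.1 hd hc hc')
  symm
  refine Finset.sum_bij' (fun p _ => p.1 + p.2) 
    (fun f _ => (fun c => if c ∈ C then f c else 0, fun c => if c ∈ D then f c else 0)) ?_ ?_ ?_ ?_ ?_
  · rintro ⟨f, f'⟩ hf
    rw [Finset.mem_product, mem_LF, mem_LF] at hf
    obtain ⟨⟨a1, a2, a3⟩, ⟨b1, b2, b3⟩⟩ := hf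
    rw [mem_LF]
    simp only [Finset.mem_union, Pi.add_apply] at *
    refine ⟨fun c hc => ?_, ?_, ?_⟩
    · push Not at hc
      rw [a1 c hc.1, b1 c hc.2]
    · rintro c (hc | hc) c' (hc' | hc') hn
      · rw [b1 c (hCD c hc), b1 c' (hCD c' hc')]; simpa using a2 c hc c' hc' hn
      · exact absurd hn (h1 c hc c' hc').2
      · exact absurd hn (h1 c' hc' c hc).1
      · rw [a1 c (fun h => hCD c h hc), a1 c' (fun h => hCD c' h hc')]; simpa using b2 c hc c' hc' hn
    · rintro c (hc | hc)
      · rw [b1 c (hCD c hc)]; simpa using a3 c hc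
      · rw [a1 c (fun h => hCD c h hc)]; simpa using b3 c hc
  · intro f hf
    rw [mem_LF] at hf
    obtain ⟨a1, a2, a3⟩ := hf
    rw [Finset.mem_product, mem_LF, mem_LF]
    refine ⟨⟨fun c hc => by simp [hc], fun c hc c' hc' hn => ?_, fun c hc => ?_⟩,
      ⟨fun c hc => by simp [hc], fun c hc c' hc' hn => ?_, fun c hc => ?_⟩⟩
    · simpa [hc, hc'] using a2 c (by simp [hc]) c' (by simp [hc']) hn
    · simpa [hc] using a3 c (by simp [hc])
    · simpa [hc, hc'] using a2 c (by simp [hc]) c' (by simp [hc']) hn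
    · simpa [hc] using a3 c (by simp [hc])
  · rintro ⟨f, f'⟩ hf
    rw [Finset.mem_product, mem_LF, mem_LF] at hf
    obtain ⟨⟨a1, a2, a3⟩, ⟨b1, b2, b3⟩⟩ := hf
    simp only [Pi.add_apply, Prod.mk.injEq] at *
    constructor <;> funext c
    · by_cases hc : c ∈ C
      · simp [hc, b1 c (hCD c hc)]
      · simp [hc, a1 c hc]
    · by_cases hc : c ∈ D
      · simp [hc, a1 c (fun h => hCD c h hc)]
      · simp [hc, b1 c hc]
  · intro f hf
    rw [mem_LF] at hf
    funext c
    by_cases hc : c ∈ C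
    · simp [hc, hCD c hc]
    · by_cases hc' : c ∈ D
      · simp [hc, hc']
      · simp [hc, hc', hf.1 c (by simp [hc, hc'])]
  · rintro ⟨f, f'⟩ hf
    rw [Finset.mem_product, mem_LF, mem_LF] at hf
    obtain ⟨⟨a1, a2, a3⟩, ⟨b1, b2, b3⟩⟩ := hf
    simp only at *
    rw [← pow_add, Finset.sum_union hd]
    congr 2
    · refine Finset.sum_congr rfl fun c hc => ?_
      simp [b1 c (hCD c hc)]
    · refine Finset.sum_congr rfl fun c hc => ?_
      simp [a1 c (fun h => hCD c h hc)]

theorem not_nested_self (r : ℕ × ℕ) : ¬ NestedIn r r := fun h => lt_irrefl _ h.1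

/-- labellings with root label 0 -/
theorem PL_root_zero_part (C : Finset (ℕ × ℕ)) (r : ℕ × ℕ) (g : ℕ × ℕ → ℕ)
    (hr : ∀ c ∈ C, NestedIn c r) :
    (LF (insert r C) g).filter (fun f => f r = 0) = LF C g := by
  have hrC : r ∉ C := fun h => not_nested_self r (hr r h)
  ext f
  rw [Finset.mem_filter, mem_LF, mem_LF]
  constructor
  · rintro ⟨⟨a1, a2, a3⟩, a4⟩
    refine ⟨fun c hc => ?_, fun c hc c' hc' => a2 c (by simp [hc]) c' (by simp [hc']),
      fun c hc => a3 c (by simp [hc])⟩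
    by_cases h : c = r
    · rw [h, a4]
    · exact a1 c (by simp [h, hc])
  · rintro ⟨a1, a2, a3⟩
    have h0 := a1 r hrC
    refine ⟨⟨fun c hc => a1 c (fun h => hc (by simp [h])), ?_, ?_⟩, h0⟩
    · intro c hc c' hc' hn
      rcases Finset.mem_insert.1 hc with rfl | hcC
      · simp [h0]
      · rcases Finset.mem_insert.1 hc' with rfl | hcC'
        · have := hr c hcC
          exact absurd (this.1.trans hn.1) (lt_irrefl _)
        · exact a2 c hcC c' hcC' hn
    · intro c hc
      rcases Finset.mem_insert.1 hc with rfl | hc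
      · simp [h0]
      · exact a3 c hc

theorem PL_root_zero (C : Finset (ℕ × ℕ)) (r : ℕ × ℕ) (g : ℕ × ℕ → ℕ)
    (hr : ∀ c ∈ C, NestedIn c r) (hg : g r = 0) : PL (insert r C) g = PL C g := by
  have hrC : r ∉ C := fun h => not_nested_self r (hr r h)
  have h := PL_root_zero_part C r g hr
  rw [Finset.filter_true_of_mem] at h
  · unfold PL
    rw [h]
    refine Finset.sum_congr rfl fun f hf => ?_
    rw [mem_LF] at hf
    rw [Finset.sum_insert hrC, hf.1 r hrC, zero_add]
  · intro f hf
    rw [mem_LF] at hf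
    have := hf.2.2 r (by simp)
    omega

theorem PL_root_succ (C : Finset (ℕ × ℕ)) (r : ℕ × ℕ) (g : ℕ × ℕ → ℕ)
    (hr : ∀ c ∈ C, NestedIn c r) : PL (insert r C) (fun c => g c + 1) =
      PL C (fun c => g c + 1) + Polynomial.X ^ (C.card + 1) * PL (insert r C) g := by
  have hrC : r ∉ C := fun h => not_nested_self r (hr r h)
  have h := PL_root_zero_part C r (fun c => g c + 1) hr
  rw [PL, ← Finset.sum_filter_add_sum_filter_not _ (fun f => f r = 0), h]
  congr 1
  · unfold PL
    refine Finset.sum_congr rfl fun f hf => ?_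
    rw [mem_LF] at hf
    rw [Finset.sum_insert hrC, hf.1 r hrC, zero_add]
  · unfold PL
    rw [Finset.mul_sum]
    refine Finset.sum_bij' (fun f _ => fun c => f c - 1)
      (fun f _ => fun c => if c ∈ insert r C then f c + 1 else 0) ?_ ?_ ?_ ?_ ?_
    · intro f hf
      rw [Finset.mem_filter, mem_LF] at hf
      obtain ⟨⟨a1, a2, a3⟩, a4⟩ := hf
      rw [mem_LF]
      refine ⟨fun c hc => by simp [a1 c hc], fun c hc c' hc' hn => ?_, fun c hc => ?_⟩
      · have := a2 c hc c' hc' hn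
        omega
      · have := a3 c hc
        omega
    · intro f hf
      rw [mem_LF] at hf
      obtain ⟨a1, a2, a3⟩ := hf
      rw [Finset.mem_filter, mem_LF]
      refine ⟨⟨fun c hc => by rw [if_neg hc], fun c hc c' hc' hn => ?_, fun c hc => ?_⟩, ?_⟩
      · have := a2 c hc c' hc' hn
        rw [if_pos hc, if_pos hc']; omega
      · have := a3 c hc
        rw [if_pos hc]; omega
      · simp
    · intro f hf
      rw [Finset.mem_filter, mem_LF] at hf
      obtain ⟨⟨a1, a2, a3⟩, a4⟩ := hf
      funext c
      by_cases hc : c ∈ insert r C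
      · simp only [if_pos hc]
        rcases Finset.mem_insert.1 hc with rfl | hc'
        · omega
        · have := a2 r (by simp) c hc (hr c hc')
          omega
      · simp only [if_neg hc, a1 c hc]
    · intro f hf
      rw [mem_LF] at hf
      funext c
      by_cases hc : c ∈ insert r C
      · simp only [if_pos hc]; omega
      · simp only [if_neg hc, hf.1 c hc]
    · intro f hf
      rw [Finset.mem_filter, mem_LF] at hf
      obtain ⟨⟨a1, a2, a3⟩, a4⟩ := hf
      rw [← pow_add]
      congr 1
      rw [← Finset.card_insert_of_notMem hrC, Finset.card_eq_sum_ones, ← Finset.sum_add_distrib]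
      refine Finset.sum_congr rfl fun c hc => ?_
      rcases Finset.mem_insert.1 hc with rfl | hc'
      · omega
      · have := a2 r (by simp) c hc (hr c hc')
        omega

theorem qintP_add (m k : ℕ) : qintP m + Polynomial.X ^ m * qintP k = qintP (m + k) := by
  unfold qintP
  rw [Finset.sum_range_add, Finset.mul_sum]
  simp [pow_add]

theorem PL_root (C : Finset (ℕ × ℕ)) (r : ℕ × ℕ) (g : ℕ × ℕ → ℕ) (A : Polynomial ℤ)
    (hr : ∀ c ∈ C, NestedIn c r) (hg : g r = 0) 
    (hA : ∀ k, A * PL C (fun c => g c + k) = ∏ i ∈ Finset.range C.card, qintP (k + 1 + i)) (k : ℕ) :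
    A * qintP (C.card + 1) * PL (insert r C) (fun c => g c + k) 
      = ∏ i ∈ Finset.range (C.card + 1), qintP (k + 1 + i) := by
  induction k with
  | zero =>
    rw [PL_root_zero C r _ hr (by simpa using hg), mul_right_comm, hA, Finset.prod_range_succ]
    congr 2; omega
  | succ k ih =>
    have h1 := PL_root_succ C r (fun c => g c + k) hr
    have h2 := hA (k + 1)
    simp only [← add_assoc] at h1 h2 ⊢
    rw [h1, mul_add, mul_right_comm, h2, mul_left_comm, ih, Finset.prod_range_succ',
      Finset.prod_range_succ]
    have e : qintP (k + 1 + 1 + C.card) = qintP (C.card + 1) + Polynomial.X ^ (C.card + 1) * qintP (k + 1) := by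
      rw [qintP_add]; congr 1; omega
    have e2 : ∀ i, k + 1 + (i + 1) = k + 1 + 1 + i := fun i => by omega
    rw [Finset.prod_congr rfl (fun i _ => congrArg qintP (e2 i)), e, add_zero]
    ring

/-! chords of a node -/

theorem DR.height_nonneg {a : List Bool} {m : ℕ} {A : Polynomial ℤ} (ha : DR a m A) :
    ∀ k, 0 ≤ heightAt a k := by
  induction ha with
  | nil => intro k; simp [heightAt]
  | node a b m n A B h1 h2 ih1 ih2 =>
    intro k
    cases k with
    | zero => simp [heightAt]
    | succ k =>
      have i1 := ih1 k
      have i2 := ih2 (k - a.length - 1)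
      have c1 := h1.countf
      have c2 := h1.countt
      unfold heightAt at *
      rw [List.take_succ_cons, List.take_append]
      by_cases hk : k ≤ a.length
      · rw [show k - a.length = 0 by omega]; simp; omega
      · obtain ⟨j, hj⟩ : ∃ j, k - a.length = j + 1 := ⟨k - a.length - 1, by omega⟩
        rw [hj] at i2 ⊢
        rw [List.take_of_length_le (by omega)]
        simp at i2 ⊢; omega

section node
variable {a b : List Bool} {m : ℕ} {A : Polynomial ℤ}

theorem take_node_a (a b : List Bool) (k : ℕ) (hk : k ≤ a.length) :
    (true :: (a ++ false :: b)).take (k + 1) = true :: a.take k := by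
  rw [List.take_succ_cons, List.take_append, show k - a.length = 0 by omega]; simp

theorem take_node_b (a b : List Bool) (k : ℕ) :
    (true :: (a ++ false :: b)).take (k + (a.length + 2)) = true :: (a ++ false :: b.take k) := by
  rw [show k + (a.length + 2) = (a.length + (k + 1)) + 1 by omega, List.take_succ_cons,
    List.take_append, List.take_of_length_le (by omega)]
  simp

theorem height_a (a b : List Bool) (k : ℕ) (hk : k ≤ a.length) :
    heightAt (true :: (a ++ false :: b)) (k + 1) = heightAt a k + 1 := by
  unfold heightAt
  rw [take_node_a a b k hk]; simp; omega

theorem height_b (ha : DR a m A) (b : List Bool) (k : ℕ) :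
    heightAt (true :: (a ++ false :: b)) (k + (a.length + 2)) = heightAt b k := by
  unfold heightAt
  rw [take_node_b a b k]
  have c1 := ha.countf
  have c2 := ha.countt
  simp; omega

theorem chord_a (ha : DR a m A) (b : List Bool) (i j : ℕ) :
    IsChord a i j ↔ IsChord (true :: (a ++ false :: b)) (i + 1) (j + 1) ∧ j < a.length := by
  unfold IsChord
  by_cases hj : j < a.length
  swap
  · simp [hj]
  by_cases hi : i < j
  swap
  · simp [hi]
  rw [height_a a b (j + 1) (by omega), height_a a b i (by omega)]
  have e1 : (true :: (a ++ false :: b)).getD (i + 1) false = a.getD i false := by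
    rw [List.getD_cons_succ, List.getD_append _ _ _ _ (by omega)]
  have e2 : (true :: (a ++ false :: b)).getD (j + 1) true = a.getD j true := by
    rw [List.getD_cons_succ, List.getD_append _ _ _ _ (by omega)]
  rw [e1, e2]
  have e3 : (∀ k ∈ Finset.Icc (i + 1 + 1) (j + 1), heightAt a i + 1 < heightAt (true :: (a ++ false :: b)) k)
      ↔ ∀ k ∈ Finset.Icc (i + 1) j, heightAt a i < heightAt a k := by
    constructor
    · intro h k hk
      rw [Finset.mem_Icc] at hk
      have := h (k + 1) (by rw [Finset.mem_Icc]; omega)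
      rw [height_a a b k (by omega)] at this
      omega
    · intro h k hk
      rw [Finset.mem_Icc] at hk
      obtain ⟨k, rfl⟩ : ∃ k', k = k' + 1 := ⟨k - 1, by omega⟩
      have := h k (by rw [Finset.mem_Icc]; omega)
      rw [height_a a b k (by omega)]
      omega
  rw [e3]
  simp [hj, hi]
  intros; omega

theorem chord_b (ha : DR a m A) (b : List Bool) (i j : ℕ) :
    IsChord b i j ↔ IsChord (true :: (a ++ false :: b)) (i + (a.length + 2)) (j + (a.length + 2)) := by
  unfold IsChord
  have e0 : j + (a.length + 2) + 1 = (j + 1) + (a.length + 2) := by omega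
  rw [e0, height_b ha, height_b ha]
  have e : ∀ i x, (true :: (a ++ false :: b)).getD (i + (a.length + 2)) x = b.getD i x := by
    intro i x
    rw [show i + (a.length + 2) = (a.length + (i + 1)) + 1 by omega, List.getD_cons_succ,
      List.getD_append_right _ _ _ _ (by omega)]
    simp
  rw [e, e]
  have e3 : (∀ k ∈ Finset.Icc (i + (a.length + 2) + 1) (j + (a.length + 2)), 
        heightAt b i < heightAt (true :: (a ++ false :: b)) k)
      ↔ ∀ k ∈ Finset.Icc (i + 1) j, heightAt b i < heightAt b k := by
    constructor
    · intro h k hk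
      rw [Finset.mem_Icc] at hk
      have := h (k + (a.length + 2)) (by rw [Finset.mem_Icc]; omega)
      rwa [height_b ha] at this
    · intro h k hk
      rw [Finset.mem_Icc] at hk
      obtain ⟨k, rfl⟩ : ∃ k', k = k' + (a.length + 2) := ⟨k - (a.length + 2), by omega⟩
      rw [height_b ha]
      exact h k (by rw [Finset.mem_Icc]; omega)
  rw [e3]
  have e4 : i + (a.length + 2) < j + (a.length + 2) ↔ i < j := by omega
  have e5 : j + (a.length + 2) < (true :: (a ++ false :: b)).length ↔ j < b.length := by
    simp; omega
  rw [e4, e5]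

theorem DR.height_end (ha : DR a m A) : heightAt a a.length = 0 := by
  have c1 := ha.countf
  have c2 := ha.countt
  simp [heightAt]; omega

theorem chord_node (ha : DR a m A) (b : List Bool) (i j : ℕ) :
    IsChord (true :: (a ++ false :: b)) i j ↔ (i = 0 ∧ j = a.length + 1) ∨
      (∃ i' j', i = i' + 1 ∧ j = j' + 1 ∧ IsChord a i' j') ∨
      (∃ i' j', i = i' + (a.length + 2) ∧ j = j' + (a.length + 2) ∧ IsChord b i' j') := by
  have hb0 : heightAt (true :: (a ++ false :: b)) (a.length + 2) = 0 := by
    have := height_b ha b 0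
    simpa [heightAt] using this
  have h00 : ∀ l, heightAt l 0 = 0 := fun l => by simp [heightAt]
  constructor
  · intro h
    have h' := h
    obtain ⟨h1, h2, h3, h4, h5, h6⟩ := h
    rcases Nat.eq_zero_or_pos i with rfl | hi
    · left
      refine ⟨rfl, ?_⟩
      rw [h00] at h5 h6
      have j1 : j ≤ a.length + 1 := by
        by_contra hj
        have := h6 (a.length + 2) (by rw [Finset.mem_Icc]; omega)
        omega
      by_contra hj
      have := height_a a b j (by omega)
      have := ha.height_nonneg j
      omega
    · obtain ⟨i, rfl⟩ : ∃ i', i = i' + 1 := ⟨i - 1, by omega⟩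
      obtain ⟨j, rfl⟩ : ∃ j', j = j' + 1 := ⟨j - 1, by omega⟩
      by_cases hia : i < a.length
      · right; left
        refine ⟨i, j, rfl, rfl, (chord_a ha b i j).2 ⟨h', ?_⟩⟩
        by_contra hj
        have k1 := h6 (a.length + 1) (by rw [Finset.mem_Icc]; omega)
        rw [height_a a b _ le_rfl, height_a a b i (by omega), ha.height_end] at k1
        have := ha.height_nonneg i
        omega
      · by_cases hia' : i = a.length
        · subst hia'
          simp at h3
        · right; right
          obtain ⟨i', hi'⟩ : ∃ i', i + 1 = i' + (a.length + 2) := ⟨i - (a.length + 1), by omega⟩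
          obtain ⟨j', hj'⟩ : ∃ j', j + 1 = j' + (a.length + 2) := ⟨j - (a.length + 1), by omega⟩
          refine ⟨i', j', hi', hj', (chord_b ha b i' j').2 ?_⟩
          rw [← hi', ← hj']; exact h'
  · rintro (⟨rfl, rfl⟩ | ⟨i, j, rfl, rfl, h⟩ | ⟨i, j, rfl, rfl, h⟩)
    · refine ⟨by omega, by simp, by simp, by simp, ?_, ?_⟩
      · rw [h00, hb0]
      · intro k hk
        rw [Finset.mem_Icc] at hk
        obtain ⟨k, rfl⟩ : ∃ k', k = k' + 1 := ⟨k - 1, by omega⟩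
        rw [h00, height_a a b k (by omega)]
        have := ha.height_nonneg k
        omega
    · exact ((chord_a ha b i j).1 h).1
    · exact (chord_b ha b i j).1 h

end node

theorem mem_chords (l : List Bool) (c : ℕ × ℕ) : c ∈ chords l ↔ IsChord l c.1 c.2 := by
  unfold chords
  rw [Finset.mem_filter, Finset.mem_product, Finset.mem_range, Finset.mem_range]
  constructor
  · exact fun h => h.2
  · intro h
    have h1 := h.1
    have h2 := h.2.1
    exact ⟨⟨by omega, h2⟩, h⟩

def sh (s : ℕ) (c : ℕ × ℕ) : ℕ × ℕ := (c.1 + s, c.2 + s)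

theorem sh_inj (s : ℕ) : Function.Injective (sh s) := by
  rintro ⟨a, b⟩ ⟨c, d⟩ h
  simpa [sh] using h

theorem sh_nested (s : ℕ) (c c' : ℕ × ℕ) : NestedIn (sh s c') (sh s c) ↔ NestedIn c' c := by
  simp [sh, NestedIn]

theorem chords_node {a : List Bool} {m : ℕ} {A : Polynomial ℤ} (ha : DR a m A) (b : List Bool) :
    chords (true :: (a ++ false :: b)) = 
      insert (0, a.length + 1) ((chords a).image (sh 1)) ∪ (chords b).image (sh (a.length + 2)) := by
  ext ⟨i, j⟩
  rw [mem_chords, chord_node ha b]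
  simp only [Finset.mem_union, Finset.mem_insert, Finset.mem_image, mem_chords, Prod.exists, sh,
    Prod.mk.injEq, or_assoc]
  refine or_congr Iff.rfl (or_congr ?_ ?_) <;>
  · constructor
    · rintro ⟨x, y, rfl, rfl, h⟩; exact ⟨x, y, h, rfl, rfl⟩
    · rintro ⟨x, y, h, rfl, rfl⟩; exact ⟨x, y, rfl, rfl, h⟩

theorem chord_lt {l : List Bool} {c : ℕ × ℕ} (h : c ∈ chords l) : c.1 < c.2 ∧ c.2 < l.length := by
  rw [mem_chords] at h; exact ⟨h.1, h.2.1⟩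

theorem cap_root (l : List Bool) (j : ℕ) : cap l (0, j) = 0 := by simp [cap]

theorem cap_a {a b : List Bool} {c : ℕ × ℕ} (h : c ∈ chords a) :
    cap (true :: (a ++ false :: b)) (sh 1 c) = cap a c := by
  have := chord_lt h
  unfold cap sh
  rw [take_node_a a b c.1 (by omega)]
  simp

theorem cap_b {a b : List Bool} {m : ℕ} {A : Polynomial ℤ} (ha : DR a m A) {c : ℕ × ℕ} :
    cap (true :: (a ++ false :: b)) (sh (a.length + 2) c) = cap b c + (m + 1) := by
  have c1 := ha.countf
  unfold cap sh
  rw [take_node_b a b c.1]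
  simp; omega

theorem node_facts {a b : List Bool} {m : ℕ} {A : Polynomial ℤ} (ha : DR a m A) :
    (∀ c ∈ (chords a).image (sh 1), NestedIn c (0, a.length + 1)) ∧
    (∀ c ∈ insert (0, a.length + 1) ((chords a).image (sh 1)),
      c.2 < a.length + 2) ∧ (∀ d ∈ (chords b).image (sh (a.length + 2)), a.length + 2 ≤ d.1 ∧ d.1 < d.2) := by
  have h1 : ∀ c ∈ (chords a).image (sh 1), NestedIn c (0, a.length + 1) := by
    rw [Finset.forall_mem_image]
    intro c hc
    have := chord_lt hc
    simp [NestedIn, sh]; omega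
  refine ⟨h1, ?_, ?_⟩
  · intro c hc
    rcases Finset.mem_insert.1 hc with rfl | hc
    · simp
    · have := h1 c hc
      have := this.2.2
      simp at this; omega
  · rw [Finset.forall_mem_image]
    intro c hc
    have := chord_lt hc
    simp [sh]; omega

theorem node_disj {a b : List Bool} {m : ℕ} {A : Polynomial ℤ} (ha : DR a m A) :
    Disjoint (insert (0, a.length + 1) ((chords a).image (sh 1))) 
      ((chords b).image (sh (a.length + 2))) := by
  obtain ⟨h1, h2, h3⟩ := node_facts (b := b) ha
  rw [Finset.disjoint_left]
  intro c hc hc'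
  have := h2 c hc
  have := h3 c hc'
  omega

theorem DR.card {a : List Bool} {m : ℕ} {A : Polynomial ℤ} (ha : DR a m A) :
    (chords a).card = m := by
  induction ha with
  | nil => simp [chords]
  | node a b m n A B ha hb ih1 ih2 =>
    obtain ⟨h1, h2, h3⟩ := node_facts (b := b) ha
    rw [chords_node ha, Finset.card_union_of_disjoint (node_disj ha), Finset.card_insert_of_notMem,
      Finset.card_image_of_injective _ (sh_inj _), Finset.card_image_of_injective _ (sh_inj _), ih1, ih2]
    · omega
    · intro h
      exact not_nested_self _ (h1 _ h)

theorem DR.formula {a : List Bool} {m : ℕ} {A : Polynomial ℤ} (ha : DR a m A) :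
    ∀ k, A * PL (chords a) (fun c => cap a c + k) = ∏ i ∈ Finset.range m, qintP (k + 1 + i) := by
  induction ha with
  | nil => intro k; simp [chords, PL_empty]
  | node a b m n A B ha hb ih1 ih2 =>
    intro k
    obtain ⟨h1, h2, h3⟩ := node_facts (b := b) ha
    rw [chords_node ha, PL_union _ _ _ (node_disj ha)]
    swap
    · intro c hc d hd
      have i2 := h2 c hc
      have i3 := h3 d hd
      constructor <;> rintro ⟨x, y, z⟩ <;> omega
    have hcard : ((chords a).image (sh 1)).card = m := by
      rw [Finset.card_image_of_injective _ (sh_inj _), ha.card]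
    have r := PL_root ((chords a).image (sh 1)) (0, a.length + 1) (cap (true :: (a ++ false :: b))) A h1
      (cap_root _ _) (fun k => by
        rw [PL_image _ _ _ (sh_inj 1) (sh_nested 1), hcard, ← ih1 k]
        congr 1
        refine PL_congr fun c hc => ?_
        rw [cap_a hc]) k
    rw [hcard] at r
    have s : B * PL ((chords b).image (sh (a.length + 2))) (fun c => cap (true :: (a ++ false :: b)) c + k)
        = ∏ i ∈ Finset.range n, qintP (k + 1 + (m + 1 + i)) := by
      rw [PL_image _ _ _ (sh_inj _) (sh_nested _)]
      have := ih2 (k + (m + 1))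
      have e : ∀ i, k + 1 + (m + 1 + i) = k + (m + 1) + 1 + i := fun i => by omega
      simp only [e]
      rw [← this]
      congr 1
      refine PL_congr fun c hc => ?_
      rw [cap_b ha]; omega
    rw [show m + n + 1 = (m + 1) + n by omega, Finset.prod_range_add, ← r, ← s]
    ring

/-! leaf bound versus bound everywhere -/

theorem DR.leaf_or {a : List Bool} {m : ℕ} {A : Polynomial ℤ} (ha : DR a m A) :
    ∀ c ∈ chords a, (∀ c' ∈ chords a, ¬ NestedIn c' c) ∨
      ∃ c' ∈ chords a, NestedIn c' c ∧ cap a c' = cap a c := by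
  induction ha with
  | nil => intro c hc; simp [chords] at hc
  | node a b m n A B ha hb ih1 ih2 =>
    intro c hc
    obtain ⟨h1, h2, h3⟩ := node_facts (b := b) ha
    have hch := chords_node ha b
    have hc0 := hc
    rw [hch, Finset.mem_union, Finset.mem_insert] at hc
    rcases hc with (rfl | hc) | hc
    · cases ha with
      | nil =>
        left
        intro c' hc' hn
        obtain ⟨x, y, z⟩ := hn
        simp at *; omega
      | node a1 a2 m1 m2 A1 A2 g1 g2 =>
        right
        have hm : sh 1 (0, a1.length + 1) ∈ (chords (true :: (a1 ++ false :: a2))).image (sh 1) := by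
          refine Finset.mem_image_of_mem _ ?_
          rw [chords_node g1]; simp
        refine ⟨sh 1 (0, a1.length + 1), ?_, h1 _ hm, ?_⟩
        · rw [hch]; simp only [Finset.mem_union, Finset.mem_insert]; exact Or.inl (Or.inr hm)
        · simp [cap, sh]
    · obtain ⟨d, hd, rfl⟩ := Finset.mem_image.1 hc
      rcases ih1 d hd with h | ⟨d', hd', hn, hcap⟩
      · left
        intro c' hc' hn
        rw [hch, Finset.mem_union, Finset.mem_insert] at hc'
        rcases hc' with (rfl | hc') | hc'
        · obtain ⟨x, y, z⟩ := hn
          simp at x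
        · obtain ⟨d', hd', rfl⟩ := Finset.mem_image.1 hc'
          exact h d' hd' ((sh_nested _ _ _).1 hn)
        · have := h3 c' hc'
          have := h2 (sh 1 d) (by simp only [Finset.mem_insert]; exact Or.inr hc)
          obtain ⟨x, y, z⟩ := hn
          omega
      · right
        refine ⟨sh 1 d', ?_, (sh_nested _ _ _).2 hn, ?_⟩
        · rw [hch]; simp only [Finset.mem_union, Finset.mem_insert]
          exact Or.inl (Or.inr (Finset.mem_image_of_mem _ hd'))
        · rw [cap_a hd, cap_a hd', hcap]
    · obtain ⟨d, hd, rfl⟩ := Finset.mem_image.1 hc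
      rcases ih2 d hd with h | ⟨d', hd', hn, hcap⟩
      · left
        intro c' hc' hn
        rw [hch, Finset.mem_union] at hc'
        rcases hc' with hc' | hc'
        · have := h2 c' hc'
          have := h3 _ hc
          obtain ⟨x, y, z⟩ := hn
          omega
        · obtain ⟨d', hd', rfl⟩ := Finset.mem_image.1 hc'
          exact h d' hd' ((sh_nested _ _ _).1 hn)
      · right
        refine ⟨sh (a.length + 2) d', ?_, (sh_nested _ _ _).2 hn, ?_⟩
        · rw [hch]; simp only [Finset.mem_union]
          exact Or.inr (Finset.mem_image_of_mem _ hd')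
        · rw [cap_b ha, cap_b ha, hcap]

theorem DR.LS {a : List Bool} {m : ℕ} {A : Polynomial ℤ} (ha : DR a m A) :
    LSLabellings a = LL (chords a) (cap a) := by
  ext f
  constructor
  · rintro ⟨a1, a2, a3⟩
    refine ⟨a1, a2, ?_⟩
    have key : ∀ N, ∀ c ∈ chords a, c.2 - c.1 ≤ N → f c ≤ cap a c := by
      intro N
      induction N with
      | zero =>
        intro c hc hN
        have := chord_lt hc
        omega
      | succ N ih =>
        intro c hc hN
        rcases ha.leaf_or c hc with h | ⟨c', hc', hn, hcap⟩
        · exact a3 c hc h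
        · rw [← hcap]
          refine (a2 c hc c' hc' hn).trans (ih c' hc' ?_)
          obtain ⟨x, y, z⟩ := hn
          omega
    exact fun c hc => key _ c hc le_rfl
  · rintro ⟨a1, a2, a3⟩
    exact ⟨a1, a2, fun c hc _ => a3 c hc⟩

theorem DR.PLS_eq {a : List Bool} {m : ℕ} {A : Polynomial ℤ} (ha : DR a m A) :
    A * PLS a = ∏ i ∈ Finset.range m, qintP (1 + i) := by
  have := ha.formula 0
  simp only [add_zero, zero_add] at this
  rw [← this]
  congr 1
  unfold PLS
  rw [ha.LS, finsum_mem_eq_finite_toFinset_sum _ (LL_finite _ _)]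
  rfl

/-- Paper's Lemma `LSrev`: mirror symmetry of the LS generating polynomial.
The mirror image λ̄ of λ is obtained by reversing the word and flipping U ↔ D. -/
theorem stmt_13 (n : ℕ) (l : List Bool) (hd : IsDyckWord l) (hlen : l.length = 2 * n) :
    PLS l = PLS ((l.map not).reverse) := by
  obtain ⟨m, A, h⟩ := DR_of l hd
  refine mul_left_cancel₀ h.ne_zero ?_
  rw [h.PLS_eq, h.mirror.PLS_eq]
end
end

section
/- Let M ≥ 1, N ≥ 1 and c ≥ 0 be integers. Then in ℚ(q) one has ∏_{i=M+1}^{M+N−1} (1+q^i) · ( (1+q^{M+N}) · [M+N+c; M, N, c] − q^{2M+N} · [N+M−1 choose M] · [N+M+c choose c] ) = [N+M choose N]_{q²} · ([N+2M]/[2(N+M)]) · ∏_{i=1}^{N} (1+q^i) · [M+N+c choose c]. -/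
open scoped BigOperators

noncomputable section

/-- The field ℚ(q). -/
abbrev K : Type := RatFunc ℚ

/-- The variable q. -/
def qq : K := RatFunc.X

/-- The quantum integer [n] = 1 + q + ⋯ + q^{n-1}. -/
def qint (n : ℕ) : K := ∑ i ∈ Finset.range n, qq ^ i

/-- The quantum factorial [n]! = [1][2]⋯[n]. -/
def qfact (n : ℕ) : K := ∏ i ∈ Finset.range n, qint (i + 1)

/-- The Gaussian binomial coefficient [n choose k] = [n]!/([k]!·[n-k]!),
with the convention that it is 0 when k > n. -/
def qbinom (n k : ℕ) : K :=
  if k ≤ n then qfact n / (qfact k * qfact (n - k)) else 0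

/-- The q-multinomial coefficient [k₁+⋯+k_r; k₁,…,k_r] = [k₁+⋯+k_r]!/([k₁]!⋯[k_r]!). -/
def qmultinom (ks : List ℕ) : K := qfact ks.sum / (ks.map qfact).prod

/-- The q-double factorial [2m]!! = [2][4]⋯[2m]. -/
def qdfact (m : ℕ) : K := ∏ i ∈ Finset.range m, qint (2 * (i + 1))

/-- The q²-binomial coefficient [n choose k]_{q²} = [2n]!!/([2(n-k)]!!·[2k]!!). -/
def qbinom2 (n k : ℕ) : K :=
  if k ≤ n then qdfact n / (qdfact (n - k) * qdfact k) else 0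

theorem aux_qint_add (a b : ℕ) : qint (a + b) = qint a + qq ^ a * qint b := by
  simp only [qint, Finset.sum_range_add, Finset.mul_sum, pow_add]

theorem aux_qint_two (n : ℕ) : qint (2 * n) = (1 + qq ^ n) * qint n := by
  rw [two_mul, aux_qint_add]; ring

theorem aux_qint_ne (n : ℕ) : qint (n + 1) ≠ 0 := by
  have h : qint (n + 1) = algebraMap (Polynomial ℚ) (RatFunc ℚ)
      (∑ i ∈ Finset.range (n + 1), Polynomial.X ^ i) := by
    simp [qint, qq, map_sum, map_pow, RatFunc.algebraMap_X]
  rw [h]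
  apply RatFunc.algebraMap_ne_zero
  intro h0
  have h1 := congrArg (Polynomial.eval 1) h0
  simp [Polynomial.eval_finset_sum] at h1
  have h2 : (0 : ℚ) ≤ n := Nat.cast_nonneg n
  linarith

theorem aux_one_add_ne (n : ℕ) : (1 + qq ^ (n + 1)) ≠ 0 := by
  intro h
  have h1 := aux_qint_two (n + 1)
  rw [h, zero_mul] at h1
  exact aux_qint_ne (2 * n + 1) h1

theorem aux_qfact_succ (n : ℕ) : qfact (n + 1) = qfact n * qint (n + 1) := by
  simp [qfact, Finset.prod_range_succ]

theorem aux_qfact_ne (n : ℕ) : qfact n ≠ 0 :=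
  Finset.prod_ne_zero_iff.mpr fun i _ => aux_qint_ne i

def auxP (n : ℕ) : K := ∏ i ∈ Finset.range n, (1 + qq ^ (i + 1))

theorem auxP_succ (n : ℕ) : auxP (n + 1) = auxP n * (1 + qq ^ (n + 1)) := by
  simp [auxP, Finset.prod_range_succ]

theorem auxP_ne (n : ℕ) : auxP n ≠ 0 :=
  Finset.prod_ne_zero_iff.mpr fun i _ => aux_one_add_ne i

theorem aux_qdfact (n : ℕ) : qdfact n = auxP n * qfact n := by
  simp only [qdfact, auxP, qfact, ← Finset.prod_mul_distrib, aux_qint_two]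

theorem aux_Icc (M n : ℕ) :
    auxP M * (∏ i ∈ Finset.Icc (M + 1) (M + n), (1 + qq ^ i)) = auxP (M + n) := by
  induction n with
  | zero => simp
  | succ k ih =>
    rw [← add_assoc, Finset.prod_Icc_succ_top (by omega), ← mul_assoc, ih, auxP_succ]

theorem stmt_14 (M N c : ℕ) (hM : 1 ≤ M) (hN : 1 ≤ N) :
    (∏ i ∈ Finset.Icc (M + 1) (M + N - 1), (1 + qq ^ i)) *
        ((1 + qq ^ (M + N)) * qmultinom [M, N, c]
          - qq ^ (2 * M + N) * qbinom (N + M - 1) M * qbinom (N + M + c) c)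
      = qbinom2 (N + M) N * (qint (N + 2 * M) / qint (2 * (N + M))) *
          (∏ i ∈ Finset.Icc 1 N, (1 + qq ^ i)) * qbinom (M + N + c) c := by
  obtain ⟨n, rfl⟩ : ∃ n, N = n + 1 := ⟨N - 1, by omega⟩
  have e1 : ∏ i ∈ Finset.Icc (M + 1) (M + (n + 1) - 1), (1 + qq ^ i)
      = auxP (M + n) / auxP M := by
    rw [eq_div_iff (auxP_ne M), mul_comm]
    exact aux_Icc M n
  have e2 : ∏ i ∈ Finset.Icc 1 (n + 1), (1 + qq ^ i) = auxP (n + 1) := by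
    have := aux_Icc 0 (n + 1)
    simpa [auxP] using this
  have e3 : qmultinom [M, n + 1, c]
      = qfact (M + n + 1 + c) / (qfact M * (qfact (n + 1) * qfact c)) := by
    simp [qmultinom, add_assoc]
  have e4 : qbinom (n + 1 + M - 1) M = qfact (M + n) / (qfact M * qfact n) := by
    rw [show n + 1 + M - 1 = M + n by omega, qbinom, if_pos (by omega),
      show M + n - M = n by omega]
  have e5 : qbinom (M + n + 1 + c) c
      = qfact (M + n + 1 + c) / (qfact c * qfact (M + n + 1)) := by
    rw [qbinom, if_pos (by omega), show M + n + 1 + c - c = M + n + 1 by omega]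
  have e6 : qbinom2 (n + 1 + M) (n + 1) = auxP (M + n + 1) * qfact (M + n + 1)
      / (auxP M * qfact M * (auxP (n + 1) * qfact (n + 1))) := by
    rw [qbinom2, if_pos (by omega), show n + 1 + M - (n + 1) = M by omega,
      show n + 1 + M = M + n + 1 by omega]
    simp only [aux_qdfact]
  have key : qint (n + 1 + 2 * M)
      = (1 + qq ^ (M + n + 1)) * qint (M + n + 1) - qq ^ (2 * M + (n + 1)) * qint (n + 1) := by
    rw [← aux_qint_two, show 2 * (M + n + 1) = (2 * M + (n + 1)) + (n + 1) by omega,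
      aux_qint_add (2 * M + (n + 1)), show n + 1 + 2 * M = 2 * M + (n + 1) by omega]
    ring
  rw [e1, e2, e3, e4, e6, key, show n + 1 + M + c = M + n + 1 + c by omega,
    show M + (n + 1) + c = M + n + 1 + c by omega, e5,
    show n + 1 + M = M + n + 1 by omega, show M + (n + 1) = M + n + 1 by omega,
    aux_qint_two, auxP_succ (M + n), aux_qfact_succ (M + n), aux_qfact_succ n]
  have h1 := auxP_ne M
  have h2 := auxP_ne (n + 1)
  have h3 := aux_qfact_ne M
  have h4 := aux_qfact_ne n
  have h5 := aux_qfact_ne c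
  have h6 := aux_qfact_ne (M + n)
  have h7 := aux_qint_ne n
  have h8 := aux_qint_ne (M + n)
  have h9 := aux_one_add_ne (M + n)
  generalize qq ^ (2 * M + (n + 1)) = y
  generalize 1 + qq ^ (M + n + 1) = x at *
  generalize auxP M = a1 at *
  generalize auxP (n + 1) = a2 at *
  generalize auxP (M + n) = a3 at *
  generalize qfact M = b1 at *
  generalize qfact n = b2 at *
  generalize qfact c = b3 at *
  generalize qfact (M + n) = b4 at *
  generalize qfact (M + n + 1 + c) = b5 at *
  generalize qint (n + 1) = d1 at *
  generalize qint (M + n + 1) = d2 at *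
  clear key e1 e2 e3 e4 e5 e6
  field_simp
end
end
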